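/- For every complex number q with 0 < |q| < 1, one has ∑_{i,j,k,l ≥ 0} q^{2i²+2j²+2k²+2l²−2ij−2ik−2il+2jk+2jl−i+j+k+2l} / ((q²;q²)_i (q²;q²)_j (q²;q²)_k (q²;q²)_l) = J_6² / (J_1 J_3). -/

import Mathlib

open scoped BigOperators

/-- The infinite q-Pochhammer symbol `(a; q)_∞ = ∏_{k=0}^∞ (1 - a q^k)`. -/
noncomputable def qPochInf (a q : ℂ) : ℂ := ∏' n : ℕ, (1 - a * q ^ n)

/-- The finite q-Pochhammer symbol `(a; q)_n = ∏_{k=0}^{n-1} (1 - a q^k)`. -/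
noncomputable def qPoch (a q : ℂ) (n : ℕ) : ℂ :=
  Finset.prod (Finset.range n) (fun k => 1 - a * q ^ k)

/-- `J_m = (q^m; q^m)_∞`. -/
noncomputable def J (q : ℂ) (m : ℕ) : ℂ := qPochInf (q ^ m) (q ^ m)

/-- `J_{a,m} = (q^a; q^m)_∞ (q^{m-a}; q^m)_∞ (q^m; q^m)_∞`. -/
noncomputable def Jam (q : ℂ) (a m : ℕ) : ℂ :=
  qPochInf (q ^ a) (q ^ m) * qPochInf (q ^ (m - a)) (q ^ m) * qPochInf (q ^ m) (q ^ m)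

/-!
Read `1 / (q²; q²)_n` as `0` for `n < 0`, so that the sum ranges over `ℤ⁴`. With `j = i + s`,
`k = l + m` and `T n = n (n + 1) / 2`, the exponent becomes
`(m² + T m) + 2 (l (l + m) + l) + T (2s + 2l + m) + 2i (i + s)`, and the sums decouple. By the
Durfee rectangle identity the sum over `i` is `1 / (q²; q²)_∞` for every `s`; the sum over `s` is
then Ramanujan's `ψ(q)`, whatever the parity of `m`. In the remaining sum over `l` and `m`, a
contiguous relation for the Durfee series pairs the values of `m` at `-2n` and `2n + 1`, whose total
is a single term of `ψ(q³) / (q²; q²)_∞`. Gauss's product `ψ(q) = J_2² / J_1` is the Jacobi triple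
product at `z = 1`.

The Durfee identity itself follows from two contiguous relations: they show that the norms of the
differences of consecutive sums do not decrease with `s`, while these differences tend to `0`.
-/

open Filter Topology

section QPochhammer

variable {a q : ℂ}

lemma norm_pow_lt_one (hq : ‖q‖ < 1) {n : ℕ} (hn : n ≠ 0) : ‖q ^ n‖ < 1 := by
  simpa using pow_lt_one₀ (norm_nonneg q) hq hn

lemma qPoch_succ (a q : ℂ) (n : ℕ) : qPoch a q (n + 1) = qPoch a q n * (1 - a * q ^ n) :=
  Finset.prod_range_succ _ n

lemma one_sub_mul_pow_ne_zero (ha : ‖a‖ < 1) (hq : ‖q‖ < 1) (n : ℕ) : 1 - a * q ^ n ≠ 0 := by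
  intro h
  have hnorm : ‖a * q ^ n‖ < 1 := by
    rw [norm_mul, norm_pow]
    exact mul_lt_one_of_nonneg_of_lt_one_left (norm_nonneg a) ha
      (pow_le_one₀ (norm_nonneg q) hq.le)
  rw [← sub_eq_zero.1 h, norm_one] at hnorm
  exact hnorm.false

lemma summable_norm_mul_pow (a : ℂ) (hq : ‖q‖ < 1) : Summable fun n : ℕ ↦ ‖-(a * q ^ n)‖ := by
  simp only [norm_neg, norm_mul, norm_pow]
  exact (summable_geometric_of_lt_one (norm_nonneg q) hq).mul_left _

lemma multipliable_one_sub_mul_pow (a : ℂ) (hq : ‖q‖ < 1) :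
    Multipliable fun n : ℕ ↦ 1 - a * q ^ n := by
  simpa only [sub_eq_add_neg] using multipliable_one_add_of_summable (summable_norm_mul_pow a hq)

lemma tendsto_qPoch (a : ℂ) (hq : ‖q‖ < 1) :
    Tendsto (qPoch a q) atTop (𝓝 (qPochInf a q)) :=
  (multipliable_one_sub_mul_pow a hq).hasProd.tendsto_prod_nat

lemma qPochInf_ne_zero (ha : ‖a‖ < 1) (hq : ‖q‖ < 1) : qPochInf a q ≠ 0 := by
  simpa only [qPochInf, sub_eq_add_neg] using
    tprod_one_add_ne_zero_of_summable
      (fun n ↦ by simpa only [sub_eq_add_neg] using one_sub_mul_pow_ne_zero ha hq n)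
      (summable_norm_mul_pow a hq)

lemma qPochInf_eq_one_sub_mul (a : ℂ) (hq : ‖q‖ < 1) :
    qPochInf a q = (1 - a) * qPochInf (a * q) q := by
  have hmult : Multipliable fun n : ℕ ↦ 1 - a * q ^ (n + 1) := by
    simpa only [mul_assoc, pow_succ'] using multipliable_one_sub_mul_pow (a * q) hq
  rw [qPochInf, tprod_eq_zero_mul' (f := fun n : ℕ ↦ 1 - a * q ^ n) hmult]
  simp only [pow_zero, mul_one, pow_succ', ← mul_assoc, qPochInf]

lemma qPochInf_mul_qPochInf_neg (a : ℂ) (hq : ‖q‖ < 1) :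
    qPochInf a q * qPochInf (-a) q = qPochInf (a ^ 2) (q ^ 2) := by
  refine ((multipliable_one_sub_mul_pow a hq).tprod_mul
    (multipliable_one_sub_mul_pow (-a) hq)).symm.trans (tprod_congr fun n ↦ ?_)
  ring

end QPochhammer

section QPochInv

variable {q : ℂ}

/-- The coefficient `1 / (q; q)_n`, extended to integer `n` by its conventional value `0` for
`n < 0`, so that the sums below can range over all of `ℤ`. -/
noncomputable def qPochInv (q : ℂ) : ℤ → ℂ
  | .ofNat n => (qPoch q q n)⁻¹
  | .negSucc _ => 0

lemma qPochInv_natCast (q : ℂ) (n : ℕ) : qPochInv q n = (qPoch q q n)⁻¹ := rfl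

lemma qPochInv_of_neg (q : ℂ) {n : ℤ} (hn : n < 0) : qPochInv q n = 0 := by
  obtain ⟨m, rfl⟩ := Int.eq_negSucc_of_lt_zero hn
  rfl

lemma nonneg_of_qPochInv_ne_zero {n : ℤ} (h : qPochInv q n ≠ 0) : 0 ≤ n :=
  not_lt.1 fun hn ↦ h (qPochInv_of_neg q hn)

lemma qPochInv_zero (q : ℂ) : qPochInv q 0 = 1 := by
  simpa [qPoch] using qPochInv_natCast q 0

lemma qPochInv_sub_one (hq : ‖q‖ < 1) (n : ℤ) :
    qPochInv q (n - 1) = (1 - q ^ n) * qPochInv q n := by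
  rcases lt_trichotomy n 0 with hn | rfl | hn
  · rw [qPochInv_of_neg q hn, qPochInv_of_neg q (by lia), mul_zero]
  · rw [qPochInv_of_neg q (by lia), zpow_zero, sub_self, zero_mul]
  · obtain ⟨m, rfl⟩ : ∃ m : ℕ, n = ↑(m + 1) := ⟨(n - 1).toNat, by lia⟩
    have hne := one_sub_mul_pow_ne_zero hq hq m
    rw [Nat.cast_succ, add_sub_cancel_right, ← Nat.cast_succ, zpow_natCast, qPochInv_natCast,
      qPochInv_natCast, qPoch_succ, mul_inv, pow_succ']
    field_simp

lemma tendsto_qPochInv (hq : ‖q‖ < 1) :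
    Tendsto (fun n : ℕ ↦ qPochInv q n) atTop (𝓝 (qPochInf q q)⁻¹) :=
  (tendsto_qPoch q hq).inv₀ (qPochInf_ne_zero hq hq)

lemma exists_norm_qPochInv_le (hq : ‖q‖ < 1) : ∃ C : ℝ, ∀ n : ℤ, ‖qPochInv q n‖ ≤ C := by
  obtain ⟨C, hC⟩ := (tendsto_qPochInv hq).norm.bddAbove_range
  have hC_nat (n : ℕ) : ‖qPochInv q n‖ ≤ C := hC ⟨n, rfl⟩
  refine ⟨C, fun n ↦ ?_⟩
  obtain hn | hn := lt_or_ge n 0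
  · rw [qPochInv_of_neg q hn, norm_zero]
    exact (norm_nonneg _).trans (hC_nat 0)
  · lift n to ℕ using hn
    exact hC_nat n

end QPochInv

section Triangular

/-- The triangular number `n (n + 1) / 2` of an integer `n`; the division is exact. -/
def triangular (n : ℤ) : ℤ := n * (n + 1) / 2

lemma two_mul_triangular (n : ℤ) : 2 * triangular n = n * (n + 1) :=
  Int.mul_ediv_cancel' (Int.even_mul_succ_self n).two_dvd

lemma triangular_zero : triangular 0 = 0 := rfl

lemma triangular_add (m n : ℤ) : triangular (m + n) = triangular m + triangular n + m * n := by
  linarith [two_mul_triangular m, two_mul_triangular n, two_mul_triangular (m + n)]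

lemma triangular_neg (n : ℤ) : triangular (-n) = triangular n - n := by
  linarith [two_mul_triangular n, two_mul_triangular (-n)]

lemma triangular_succ (n : ℤ) : triangular (n + 1) = triangular n + n + 1 := by
  linarith [two_mul_triangular n, two_mul_triangular (n + 1)]

lemma triangular_two_mul (n : ℤ) : triangular (2 * n) = n * (2 * n + 1) := by
  linarith [two_mul_triangular (2 * n)]

end Triangular

section Series

variable {q z : ℂ}

lemma summable_mul_of_norm_le {ι : Type*} {f g : ι → ℂ} {C : ℝ} (hf : Summable f)
    (hg : ∀ i, ‖g i‖ ≤ C) : Summable fun i ↦ f i * g i := by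
  refine .of_norm_bounded (hf.norm.mul_right C) fun i ↦ ?_
  rw [norm_mul]
  gcongr
  exact hg i

lemma summable_nat_zpow_triangular_mul_zpow (hq0 : q ≠ 0) (hq : ‖q‖ < 1) (hz : z ≠ 0) :
    Summable fun n : ℕ ↦ q ^ triangular n * z ^ (n : ℤ) := by
  have hratio (n : ℕ) : ‖q ^ triangular ↑(n + 1) * z ^ (↑(n + 1) : ℤ)‖ /
      ‖q ^ triangular n * z ^ (n : ℤ)‖ = ‖q ^ (n + 1) * z‖ := by
    rw [← norm_div, Nat.cast_succ, triangular_succ, add_assoc, zpow_add₀ hq0, zpow_add_one₀ hz,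
      ← Nat.cast_succ, zpow_natCast q]
    have hqn : q ^ triangular n ≠ 0 := zpow_ne_zero _ hq0
    field_simp
  refine summable_of_ratio_test_tendsto_lt_one zero_lt_one
    (.of_forall fun n ↦ mul_ne_zero (zpow_ne_zero _ hq0) (zpow_ne_zero _ hz)) ?_
  simp only [hratio]
  simpa using (((tendsto_pow_atTop_nhds_zero_of_norm_lt_one hq).comp
    (tendsto_add_atTop_nat 1)).mul_const z).norm

lemma summable_zpow_triangular_mul_zpow (hq0 : q ≠ 0) (hq : ‖q‖ < 1) (hz : z ≠ 0) :
    Summable fun n : ℤ ↦ q ^ triangular n * z ^ n := by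
  refine .of_nat_of_neg (summable_nat_zpow_triangular_mul_zpow hq0 hq hz) ?_
  have hneg (n : ℕ) : q ^ triangular (-n) * z ^ (-n : ℤ) =
      q ^ triangular n * ((q * z)⁻¹) ^ (n : ℤ) := by
    rw [triangular_neg, zpow_sub₀ hq0, inv_zpow, mul_zpow, zpow_neg]
    field_simp
  simp only [hneg]
  exact summable_nat_zpow_triangular_mul_zpow hq0 hq (inv_ne_zero (mul_ne_zero hq0 hz))

lemma tsum_int_eq_tsum_even_add_tsum_odd {E : Type*} [NormedAddCommGroup E] [CompleteSpace E]
    {f : ℤ → E} (hf : Summable f) :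
    ∑' n, f n = ∑' n, f (2 * n) + ∑' n, f (2 * n + 1) := by
  have heven := mul_right_injective₀ (two_ne_zero' ℤ)
  have hodd := (add_left_injective (1 : ℤ)).comp heven
  refine (HasSum.add_isCompl ?_ (heven.hasSum_range_iff.2 (hf.comp_injective heven).hasSum)
    (hodd.hasSum_range_iff.2 (hf.comp_injective hodd).hasSum)).tsum_eq
  simpa [Function.comp_def] using Int.isCompl_even_odd

lemma tsum_mul_tsum_eq_tsum_tsum_mul_add {G R : Type*} [AddGroup G] [NormedRing R]
    [CompleteSpace R] {f g : G → R} (hf : Summable fun i ↦ ‖f i‖) (hg : Summable fun i ↦ ‖g i‖) :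
    (∑' i, f i) * ∑' j, g j = ∑' n, ∑' i, f i * g (i + n) := by
  let shear : G × G ≃ G × G := (Equiv.refl G).prodShear Equiv.addLeft
  have hsum : Summable fun p : G × G ↦ f p.1 * g (p.1 + p.2) :=
    shear.summable_iff.2 (summable_mul_of_summable_norm hf hg)
  rw [tsum_mul_tsum_of_summable_norm hf hg, ← shear.tsum_eq]
  exact hsum.tsum_prod.trans (Summable.tsum_comm (f := fun i n ↦ f i * g (i + n)) hsum).symm

lemma tendsto_tsum_mul_pow_zpow_mul {a : ℤ → ℂ} {b : ℕ → ℤ → ℂ} {B : ℂ} {C : ℝ} (hq : ‖q‖ < 1)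
    (ha : Summable a) (ha_neg : ∀ i < 0, a i = 0) (hb : ∀ n i, ‖b n i‖ ≤ C)
    (hB : Tendsto (fun n ↦ b n 0) atTop (𝓝 B)) :
    Tendsto (fun n ↦ ∑' i, a i * (q ^ n) ^ i * b n i) atTop (𝓝 (a 0 * B)) := by
  rw [← tsum_ite_eq (0 : ℤ) (fun _ ↦ a 0 * B)]
  refine tendsto_tsum_of_dominated_convergence (ha.norm.mul_right C) (fun i ↦ ?_)
    (.of_forall fun n i ↦ ?_)
  · rcases lt_trichotomy i 0 with hi | rfl | hi
    · simp [ha_neg i hi, hi.ne]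
    · simpa using hB.const_mul (a 0)
    · lift i to ℕ using hi.le
      have hpow : Tendsto (fun n : ℕ ↦ (q ^ n) ^ i) atTop (𝓝 0) := by
        simp only [pow_right_comm q]
        exact tendsto_pow_atTop_nhds_zero_of_norm_lt_one (norm_pow_lt_one hq (by lia))
      simpa [Nat.cast_ne_zero.1 hi.ne', mul_assoc] using (hpow.zero_mul_isBoundedUnder_le
        (isBoundedUnder_of ⟨C, fun n ↦ hb n i⟩)).const_mul (a i)
  · obtain hi | hi := lt_or_ge i 0
    · simp [ha_neg i hi]
    · lift i to ℕ using hi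
      have hpow : ‖(q ^ n) ^ (i : ℤ)‖ ≤ 1 := by
        rw [zpow_natCast, norm_pow, norm_pow]
        exact pow_le_one₀ (by positivity) (pow_le_one₀ (norm_nonneg q) hq.le)
      rw [mul_assoc, norm_mul, norm_mul]
      gcongr
      exact (mul_le_of_le_one_left (norm_nonneg _) hpow).trans (hb n i)

end Series

section Euler

variable {q z : ℂ}

/-- The series in Euler's expansion of `(-zq; q)_∞`. -/
noncomputable def eulerSeries (q z : ℂ) : ℂ := ∑' n : ℤ, q ^ triangular n * z ^ n * qPochInv q n

lemma summable_eulerSeries (hq0 : q ≠ 0) (hq : ‖q‖ < 1) (hz : z ≠ 0) :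
    Summable fun n : ℤ ↦ q ^ triangular n * z ^ n * qPochInv q n := by
  obtain ⟨C, hC⟩ := exists_norm_qPochInv_le hq
  exact summable_mul_of_norm_le (summable_zpow_triangular_mul_zpow hq0 hq hz) hC

lemma eulerSeries_eq_mul (hq0 : q ≠ 0) (hq : ‖q‖ < 1) (hz : z ≠ 0) :
    eulerSeries q z = (1 + z * q) * eulerSeries q (z * q) := by
  have hzq : z * q ≠ 0 := mul_ne_zero hz hq0
  have hshift : z * q * eulerSeries q (z * q) =
      ∑' n : ℤ, q ^ triangular n * z ^ n * qPochInv q (n - 1) := by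
    rw [eulerSeries, ← tsum_mul_left, ← (Equiv.subRight (1 : ℤ)).tsum_eq]
    refine tsum_congr fun n ↦ ?_
    obtain ⟨m, rfl⟩ : ∃ m, n = m + 1 := ⟨n - 1, by ring⟩
    rw [Equiv.subRight_apply, add_sub_cancel_right, triangular_succ, zpow_add_one₀ hz,
      zpow_add_one₀ hq0, zpow_add₀ hq0, mul_zpow]
    ring
  have hsub : eulerSeries q z - eulerSeries q (z * q) = z * q * eulerSeries q (z * q) := by
    rw [hshift, eulerSeries, eulerSeries,
      ← (summable_eulerSeries hq0 hq hz).tsum_sub (summable_eulerSeries hq0 hq hzq)]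
    refine tsum_congr fun n ↦ ?_
    rw [qPochInv_sub_one hq, mul_zpow]
    ring
  linear_combination hsub

lemma eulerSeries_eq_qPoch_mul (hq0 : q ≠ 0) (hq : ‖q‖ < 1) (hz : z ≠ 0) (n : ℕ) :
    eulerSeries q z = qPoch (-(z * q)) q n * eulerSeries q (z * q ^ n) := by
  induction n with
  | zero => simp [qPoch]
  | succ n ih =>
    rw [ih, eulerSeries_eq_mul hq0 hq (mul_ne_zero hz (pow_ne_zero n hq0)), qPoch_succ, pow_succ]
    ring_nf

theorem eulerSeries_eq_qPochInf (hq0 : q ≠ 0) (hq : ‖q‖ < 1) (hz : z ≠ 0) :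
    eulerSeries q z = qPochInf (-(z * q)) q := by
  have hlim : Tendsto (fun n : ℕ ↦ eulerSeries q (z * q ^ n)) atTop (𝓝 1) := by
    have h := tendsto_tsum_mul_pow_zpow_mul (b := fun _ _ ↦ 1) hq (summable_eulerSeries hq0 hq hz)
      (fun n hn ↦ by rw [qPochInv_of_neg q hn, mul_zero]) (fun _ _ ↦ norm_one.le)
      tendsto_const_nhds
    simp only [triangular_zero, qPochInv_zero, zpow_zero, mul_one] at h
    refine h.congr fun n ↦ tsum_congr fun i ↦ ?_
    rw [mul_zpow]
    ring
  have hprod := (tendsto_qPoch (-(z * q)) hq).mul hlim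
  simp only [← eulerSeries_eq_qPoch_mul hq0 hq hz, mul_one] at hprod
  exact tendsto_nhds_unique tendsto_const_nhds hprod

end Euler

section Durfee

variable {q : ℂ}

/-- The series `∑ q ^ (i (i + s) + b i) / ((q; q)_i (q; q)_{i + s})`. For `b = 0` it enumerates
partitions by their Durfee rectangle of size `i × (i + s)`; general `b` gives contiguous sums. -/
noncomputable def durfeeSum (q : ℂ) (b s : ℤ) : ℂ :=
  ∑' i : ℤ, q ^ (i * (i + s) + b * i) * (qPochInv q i * qPochInv q (i + s))

lemma summable_zpow_durfee (hq0 : q ≠ 0) (hq : ‖q‖ < 1) (b s : ℤ) :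
    Summable fun i : ℤ ↦ q ^ (i * (i + s) + b * i) := by
  refine (summable_zpow_triangular_mul_zpow (pow_ne_zero 2 hq0)
    (norm_pow_lt_one hq two_ne_zero) (zpow_ne_zero (s + b - 1) hq0)).congr fun i ↦ ?_
  rw [← zpow_natCast, ← zpow_mul, ← zpow_mul, ← zpow_add₀ hq0, Nat.cast_ofNat,
    two_mul_triangular]
  ring_nf

lemma summable_durfee (hq0 : q ≠ 0) (hq : ‖q‖ < 1) (b s m n : ℤ) :
    Summable fun i : ℤ ↦
      q ^ (i * (i + s) + b * i) * (qPochInv q (i + m) * qPochInv q (i + n)) := by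
  obtain ⟨C, hC⟩ := exists_norm_qPochInv_le hq
  simp only [← mul_assoc]
  exact summable_mul_of_norm_le (summable_mul_of_norm_le (summable_zpow_durfee hq0 hq b s)
    fun i ↦ hC (i + m)) fun i ↦ hC (i + n)

lemma durfeeSum_neg (hq0 : q ≠ 0) (b s : ℤ) :
    durfeeSum q b (-s) = q ^ (b * s) * durfeeSum q b s := by
  rw [durfeeSum, ← (Equiv.addRight s).tsum_eq, durfeeSum, ← tsum_mul_left]
  refine tsum_congr fun i ↦ ?_
  rw [Equiv.coe_addRight, add_neg_cancel_right, ← mul_assoc (q ^ (b * s)), ← zpow_add₀ hq0,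
    mul_comm (qPochInv q i)]
  ring_nf

lemma durfeeSum_eq_add (hq0 : q ≠ 0) (hq : ‖q‖ < 1) (b s : ℤ) :
    durfeeSum q b s =
      durfeeSum q (b + 1) s + q ^ (s + b + 1) * durfeeSum q (b + 1) (s + 1) := by
  have hshift : q ^ (s + b + 1) * durfeeSum q (b + 1) (s + 1) =
      ∑' i : ℤ, q ^ (i * (i + s) + b * i) * (qPochInv q (i - 1) * qPochInv q (i + s)) := by
    rw [durfeeSum, ← tsum_mul_left, ← (Equiv.subRight (1 : ℤ)).tsum_eq]
    refine tsum_congr fun i ↦ ?_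
    rw [Equiv.subRight_apply, ← mul_assoc, ← zpow_add₀ hq0]
    ring_nf
  have hsum := summable_durfee hq0 hq (b + 1) s 0 s
  have hsum' := summable_durfee hq0 hq b s (-1) s
  simp only [add_zero, ← sub_eq_add_neg] at hsum hsum'
  rw [hshift, durfeeSum, durfeeSum, ← hsum.tsum_add hsum']
  refine tsum_congr fun i ↦ ?_
  rw [qPochInv_sub_one hq, add_mul b, one_mul, ← add_assoc, zpow_add₀ hq0 _ i]
  ring

lemma durfeeSum_eq_add' (hq0 : q ≠ 0) (hq : ‖q‖ < 1) (b s : ℤ) :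
    durfeeSum q b s = q ^ s * durfeeSum q (b + 1) s + durfeeSum q (b + 1) (s - 1) := by
  have hneg := durfeeSum_eq_add hq0 hq b (-s)
  rw [show -s + 1 = -(s - 1) by ring, durfeeSum_neg hq0, durfeeSum_neg hq0, durfeeSum_neg hq0,
    ← mul_assoc, ← zpow_add₀ hq0, show -s + b + 1 + (b + 1) * (s - 1) = b * s by ring, add_mul b,
    one_mul, zpow_add₀ hq0, mul_assoc, ← mul_add] at hneg
  exact mul_left_cancel₀ (zpow_ne_zero _ hq0) hneg

lemma durfeeSum_zero_sub (hq0 : q ≠ 0) (hq : ‖q‖ < 1) (s : ℤ) :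
    durfeeSum q 0 s - durfeeSum q 0 (s + 1) =
      -q ^ (s + 1) * (durfeeSum q 0 (s + 1) - durfeeSum q 0 (s + 1 + 1)) := by
  have hleft := durfeeSum_eq_add hq0 hq (-1) (s + 1)
  have hright := durfeeSum_eq_add' hq0 hq (-1) (s + 1)
  rw [neg_add_cancel, neg_add_cancel_right] at hleft
  rw [neg_add_cancel, add_sub_cancel_right] at hright
  linear_combination hleft - hright

lemma tendsto_durfeeSum (hq0 : q ≠ 0) (hq : ‖q‖ < 1) (b : ℤ) :
    Tendsto (fun n : ℕ ↦ durfeeSum q b n) atTop (𝓝 (qPochInf q q)⁻¹) := by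
  obtain ⟨C, hC⟩ := exists_norm_qPochInv_le hq
  have h := tendsto_tsum_mul_pow_zpow_mul (b := fun n i ↦ qPochInv q (i + n)) hq
    (summable_mul_of_norm_le (summable_zpow_durfee hq0 hq b 0) hC)
    (fun i hi ↦ by rw [qPochInv_of_neg q hi, mul_zero]) (fun n i ↦ hC (i + n))
    (by simpa only [zero_add] using tendsto_qPochInv hq)
  simp only [mul_zero, add_zero, zpow_zero, qPochInv_zero, one_mul] at h
  refine h.congr fun n ↦ tsum_congr fun i ↦ ?_
  rw [← zpow_natCast, ← zpow_mul, mul_add, add_right_comm, zpow_add₀ hq0 _ (i * n), mul_comm i n]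
  ring

lemma durfeeSum_zero_natCast_succ (hq0 : q ≠ 0) (hq : ‖q‖ < 1) (n : ℕ) :
    durfeeSum q 0 ↑(n + 1) = durfeeSum q 0 n := by
  have hmono : Monotone fun n : ℕ ↦ ‖durfeeSum q 0 n - durfeeSum q 0 ↑(n + 1)‖ := by
    refine monotone_nat_of_le_succ fun n ↦ ?_
    rw [Nat.cast_succ n, durfeeSum_zero_sub hq0 hq, Nat.cast_succ (n + 1), Nat.cast_succ n,
      norm_mul, norm_neg, ← Nat.cast_succ, zpow_natCast, norm_pow]
    exact mul_le_of_le_one_left (norm_nonneg _) (pow_le_one₀ (norm_nonneg q) hq.le)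
  have hlim := tendsto_durfeeSum hq0 hq 0
  have hzero := (hlim.sub (hlim.comp (tendsto_add_atTop_nat 1))).norm
  rw [sub_self, norm_zero] at hzero
  exact (sub_eq_zero.1 (norm_le_zero_iff.1 (hmono.ge_of_tendsto hzero n))).symm

theorem durfeeSum_zero (hq0 : q ≠ 0) (hq : ‖q‖ < 1) (s : ℤ) :
    durfeeSum q 0 s = (qPochInf q q)⁻¹ := by
  have hconst (n : ℕ) : durfeeSum q 0 n = durfeeSum q 0 0 := by
    induction n with
    | zero => rfl
    | succ n ih => rw [durfeeSum_zero_natCast_succ hq0 hq, ih]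
  have hnat (n : ℕ) : durfeeSum q 0 n = (qPochInf q q)⁻¹ := by
    have hlim := tendsto_durfeeSum hq0 hq 0
    simp only [hconst] at hlim ⊢
    exact tendsto_nhds_unique tendsto_const_nhds hlim
  obtain ⟨n, rfl | rfl⟩ := s.eq_nat_or_neg
  · exact hnat n
  · rw [durfeeSum_neg hq0, zero_mul, zpow_zero, one_mul, hnat]

lemma exists_norm_durfeeSum_le (hq0 : q ≠ 0) (hq : ‖q‖ < 1) {b : ℤ} (hb : 0 ≤ b) :
    ∃ C : ℝ, ∀ s : ℤ, ‖durfeeSum q b s‖ ≤ C := by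
  obtain ⟨C, hC⟩ := (tendsto_durfeeSum hq0 hq b).norm.bddAbove_range
  have hC_nat (n : ℕ) : ‖durfeeSum q b n‖ ≤ C := hC ⟨n, rfl⟩
  refine ⟨C, fun s ↦ ?_⟩
  obtain ⟨n, rfl | rfl⟩ := s.eq_nat_or_neg
  · exact hC_nat n
  · lift b to ℕ using hb
    rw [durfeeSum_neg hq0, ← Nat.cast_mul, zpow_natCast, norm_mul, norm_pow]
    exact (mul_le_of_le_one_left (norm_nonneg _) (pow_le_one₀ (norm_nonneg q) hq.le)).trans
      (hC_nat n)

end Durfee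

section Theta

variable {q z : ℂ}

theorem jacobi_triple_product (hq0 : q ≠ 0) (hq : ‖q‖ < 1) (hz : z ≠ 0) :
    ∑' n : ℤ, q ^ triangular n * z ^ n =
      qPochInf q q * qPochInf (-(z * q)) q * qPochInf (-z⁻¹) q := by
  have hw : (z * q)⁻¹ ≠ 0 := inv_ne_zero (mul_ne_zero hz hq0)
  have hwq : (z * q)⁻¹ * q = z⁻¹ := by field_simp
  have hmul : eulerSeries q (z * q)⁻¹ * eulerSeries q z =
      (∑' n : ℤ, q ^ triangular n * z ^ n) * (qPochInf q q)⁻¹ := by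
    rw [eulerSeries, eulerSeries, tsum_mul_tsum_eq_tsum_tsum_mul_add
      (summable_eulerSeries hq0 hq hw).norm (summable_eulerSeries hq0 hq hz).norm,
      ← tsum_mul_right]
    refine tsum_congr fun n ↦ ?_
    rw [← durfeeSum_zero hq0 hq n, durfeeSum, ← tsum_mul_left]
    refine tsum_congr fun i ↦ ?_
    have hexp : i * (i + n) + 0 * i = i * n + triangular i + triangular i - i := by
      linear_combination -two_mul_triangular i
    rw [hexp, triangular_add, zpow_add₀ hz, inv_zpow, mul_zpow, zpow_sub₀ hq0, zpow_add₀ hq0,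
      zpow_add₀ hq0, zpow_add₀ hq0, zpow_add₀ hq0]
    field_simp
  rw [eulerSeries_eq_qPochInf hq0 hq hw, eulerSeries_eq_qPochInf hq0 hq hz, hwq] at hmul
  rw [mul_assoc, mul_comm (qPochInf (-(z * q)) q), hmul, mul_comm,
    inv_mul_cancel_right₀ (qPochInf_ne_zero hq hq)]

/-- Ramanujan's theta function `ψ(q) = ∑_{n ≥ 0} q ^ (n (n + 1) / 2)`, written as a bilateral series
by pairing each even index `2n ≥ 0` with `n` and each odd index `2n - 1 > 0` with `-n`. -/
noncomputable def ramanujanPsi (q : ℂ) : ℂ := ∑' n : ℤ, q ^ (n * (2 * n + 1))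

lemma tsum_zpow_triangular_two_mul_add (q : ℂ) (N : ℤ) :
    ∑' n : ℤ, q ^ triangular (2 * n + N) = ramanujanPsi q := by
  simp only [ramanujanPsi, ← triangular_two_mul]
  obtain ⟨m, rfl | rfl⟩ := Int.even_or_odd' N
  · rw [← (Equiv.subRight m).tsum_eq]
    refine tsum_congr fun n ↦ ?_
    rw [Equiv.subRight_apply, mul_sub, sub_add_cancel]
  · rw [← (Equiv.subLeft (-m - 1)).tsum_eq]
    refine tsum_congr fun n ↦ ?_
    rw [Equiv.subLeft_apply, show 2 * (-m - 1 - n) + (2 * m + 1) = -(2 * n + 1) by ring,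
      triangular_neg, triangular_succ]
    ring_nf

lemma tsum_zpow_triangular (hq0 : q ≠ 0) (hq : ‖q‖ < 1) :
    ∑' n : ℤ, q ^ triangular n = 2 * ramanujanPsi q := by
  have hsum := summable_zpow_triangular_mul_zpow hq0 hq one_ne_zero
  simp only [one_zpow, mul_one] at hsum
  have heven := tsum_zpow_triangular_two_mul_add q 0
  simp only [add_zero] at heven
  rw [tsum_int_eq_tsum_even_add_tsum_odd hsum, heven, tsum_zpow_triangular_two_mul_add, two_mul]

theorem ramanujanPsi_eq (hq0 : q ≠ 0) (hq : ‖q‖ < 1) :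
    ramanujanPsi q = qPochInf (q ^ 2) (q ^ 2) ^ 2 / qPochInf q q := by
  have hne := qPochInf_ne_zero hq hq
  have htriple := jacobi_triple_product hq0 hq one_ne_zero
  simp only [one_zpow, mul_one, one_mul, inv_one, tsum_zpow_triangular hq0 hq] at htriple
  have hfirst := qPochInf_eq_one_sub_mul (-1) hq
  rw [neg_one_mul] at hfirst
  rw [hfirst] at htriple
  rw [← qPochInf_mul_qPochInf_neg q hq, eq_div_iff hne]
  linear_combination qPochInf q q / 2 * htriple

lemma summable_zpow_mul_durfeeSum_one (hq0 : q ≠ 0) (hq : ‖q‖ < 1) :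
    Summable fun m : ℤ ↦ q ^ (m ^ 2 + triangular m) * durfeeSum (q ^ 2) 1 m := by
  obtain ⟨C, hC⟩ := exists_norm_durfeeSum_le (pow_ne_zero 2 hq0) (norm_pow_lt_one hq two_ne_zero)
    zero_le_one
  refine summable_mul_of_norm_le ((summable_zpow_triangular_mul_zpow (pow_ne_zero 3 hq0)
    (norm_pow_lt_one hq three_ne_zero) (inv_ne_zero hq0)).congr fun m ↦ ?_) hC
  rw [← zpow_natCast, ← zpow_mul, inv_zpow, ← zpow_neg, ← zpow_add₀ hq0]
  congr 1
  push_cast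
  linear_combination two_mul_triangular m

lemma zpow_mul_durfeeSum_one_add (hq0 : q ≠ 0) (hq : ‖q‖ < 1) (n : ℤ) :
    q ^ ((-(2 * n)) ^ 2 + triangular (-(2 * n))) * durfeeSum (q ^ 2) 1 (-(2 * n)) +
        q ^ ((2 * n + 1) ^ 2 + triangular (2 * n + 1)) * durfeeSum (q ^ 2) 1 (2 * n + 1) =
      (q ^ 3) ^ (n * (2 * n + 1)) * (qPochInf (q ^ 2) (q ^ 2))⁻¹ := by
  have hq20 : q ^ 2 ≠ 0 := pow_ne_zero 2 hq0
  have heven : q ^ ((-(2 * n)) ^ 2 + triangular (-(2 * n))) * (q ^ 2) ^ (1 * (2 * n)) =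
      (q ^ 3) ^ (n * (2 * n + 1)) := by
    rw [← zpow_natCast q 2, ← zpow_natCast q 3, ← zpow_mul, ← zpow_mul, ← zpow_add₀ hq0,
      triangular_neg, triangular_two_mul]
    congr 1
    push_cast
    ring
  have hodd : q ^ ((2 * n + 1) ^ 2 + triangular (2 * n + 1)) =
      (q ^ 3) ^ (n * (2 * n + 1)) * (q ^ 2) ^ (2 * n + 0 + 1) := by
    rw [← zpow_natCast q 2, ← zpow_natCast q 3, ← zpow_mul, ← zpow_mul, ← zpow_add₀ hq0,
      triangular_succ, triangular_two_mul]
    congr 1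
    push_cast
    ring
  rw [durfeeSum_neg hq20, ← mul_assoc, heven, hodd,
    ← durfeeSum_zero hq20 (norm_pow_lt_one hq two_ne_zero) (2 * n),
    durfeeSum_eq_add hq20 (norm_pow_lt_one hq two_ne_zero) 0 (2 * n), zero_add]
  ring

lemma tsum_zpow_mul_durfeeSum_one (hq0 : q ≠ 0) (hq : ‖q‖ < 1) :
    ∑' m : ℤ, q ^ (m ^ 2 + triangular m) * durfeeSum (q ^ 2) 1 m =
      ramanujanPsi (q ^ 3) * (qPochInf (q ^ 2) (q ^ 2))⁻¹ := by
  have hsum := summable_zpow_mul_durfeeSum_one hq0 hq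
  have heven : Function.Injective fun n : ℤ ↦ 2 * -n := fun m n h ↦ by simpa using h
  have hodd : Function.Injective fun n : ℤ ↦ 2 * n + 1 := fun m n h ↦ by simpa using h
  rw [tsum_int_eq_tsum_even_add_tsum_odd hsum, ← (Equiv.neg ℤ).tsum_eq, ramanujanPsi,
    ← tsum_mul_right]
  refine ((hsum.comp_injective heven).tsum_add (hsum.comp_injective hodd)).symm.trans
    (tsum_congr fun n ↦ ?_)
  simpa only [Function.comp_apply, mul_neg] using zpow_mul_durfeeSum_one_add hq0 hq n

end Theta

section QuadrupleSeries

variable {q : ℂ}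

/-- The exponent of `q` in the quadruple series. -/
def seriesExponent (i j k l : ℤ) : ℤ :=
  2*i^2 + 2*j^2 + 2*k^2 + 2*l^2 - 2*i*j - 2*i*k - 2*i*l + 2*j*k + 2*j*l - i + j + k + 2*l

/-- The general term of the quadruple series, extended by zero to all integer indices. -/
noncomputable def seriesTerm (q : ℂ) (p : ℤ × ℤ × ℤ × ℤ) : ℂ :=
  q ^ seriesExponent p.1 p.2.1 p.2.2.1 p.2.2.2 *
    (qPochInv (q ^ 2) p.1 * qPochInv (q ^ 2) p.2.1 *
      qPochInv (q ^ 2) p.2.2.1 * qPochInv (q ^ 2) p.2.2.2)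

lemma add_le_seriesExponent_add_two (i j : ℤ) {k l : ℤ} (hk : 0 ≤ k) (hl : 0 ≤ l) :
    i + j + k + l ≤ seriesExponent i j k l + 2 := by
  set N := j - i + k + l with hN
  have hsq : seriesExponent i j k l = i ^ 2 + j ^ 2 + (k - l) ^ 2 + l + (N ^ 2 + N) := by
    rw [seriesExponent, hN]
    ring
  have hi : 3 * i - 2 ≤ i ^ 2 := by
    have := Int.le_self_sq (i - 1)
    linarith [sub_sq i 1]
  have hj : -j ≤ j ^ 2 := by simpa using Int.le_self_sq (-j)
  have hN_sq : N ≤ N ^ 2 := Int.le_self_sq N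
  linarith [sq_nonneg (k - l)]

/-- The inclusion of the quadruples of natural numbers into the quadruples of integers. -/
def castQuadruple (p : ℕ × ℕ × ℕ × ℕ) : ℤ × ℤ × ℤ × ℤ := (p.1, p.2.1, p.2.2.1, p.2.2.2)

lemma castQuadruple_injective : Function.Injective castQuadruple :=
  Nat.cast_injective.prodMap (Nat.cast_injective.prodMap
    (Nat.cast_injective.prodMap Nat.cast_injective))

lemma support_seriesTerm_subset (q : ℂ) :
    Function.support (seriesTerm q) ⊆ Set.range castQuadruple := by
  rintro ⟨i, j, k, l⟩ h
  simp only [Function.mem_support, seriesTerm, mul_ne_zero_iff] at h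
  obtain ⟨-, ⟨⟨hi, hj⟩, hk⟩, hl⟩ := h
  lift i to ℕ using nonneg_of_qPochInv_ne_zero hi
  lift j to ℕ using nonneg_of_qPochInv_ne_zero hj
  lift k to ℕ using nonneg_of_qPochInv_ne_zero hk
  lift l to ℕ using nonneg_of_qPochInv_ne_zero hl
  exact ⟨(i, j, k, l), rfl⟩

lemma summable_zpow_seriesExponent (hq0 : q ≠ 0) (hq : ‖q‖ < 1) :
    Summable fun p : ℕ × ℕ × ℕ × ℕ ↦ q ^ seriesExponent p.1 p.2.1 p.2.2.1 p.2.2.2 := by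
  have hnorm : 0 < ‖q‖ := norm_pos_iff.2 hq0
  have hgeom := summable_geometric_of_lt_one hnorm.le hq
  have hgeom_prod : Summable fun p : ℕ × ℕ × ℕ × ℕ ↦
      ‖q‖ ^ p.1 * (‖q‖ ^ p.2.1 * (‖q‖ ^ p.2.2.1 * ‖q‖ ^ p.2.2.2)) :=
    hgeom.mul_of_nonneg (hgeom.mul_of_nonneg (hgeom.mul_of_nonneg hgeom
      (fun _ ↦ by positivity) fun _ ↦ by positivity) (fun _ ↦ by positivity)
      fun _ ↦ by positivity) (fun _ ↦ by positivity) fun _ ↦ by positivity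
  refine .of_norm_bounded (hgeom_prod.mul_left (‖q‖ ^ (-2 : ℤ))) fun ⟨i, j, k, l⟩ ↦ ?_
  have hexp := add_le_seriesExponent_add_two i j (Int.natCast_nonneg k) (Int.natCast_nonneg l)
  calc ‖q ^ seriesExponent i j k l‖ = ‖q‖ ^ seriesExponent i j k l := norm_zpow _ _
    _ ≤ ‖q‖ ^ (-2 + ((i : ℤ) + (j + (k + l)))) :=
      zpow_le_zpow_right_of_le_one₀ hnorm hq.le (by linarith)
    _ = ‖q‖ ^ (-2 : ℤ) * (‖q‖ ^ i * (‖q‖ ^ j * (‖q‖ ^ k * ‖q‖ ^ l))) := by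
      simp only [zpow_add₀ hnorm.ne', zpow_natCast]

lemma summable_seriesTerm (hq0 : q ≠ 0) (hq : ‖q‖ < 1) : Summable (seriesTerm q) := by
  rw [← castQuadruple_injective.summable_iff fun p hp ↦
    Function.notMem_support.1 (mt (@support_seriesTerm_subset q p) hp)]
  obtain ⟨C, hC⟩ := exists_norm_qPochInv_le (norm_pow_lt_one hq two_ne_zero)
  have hsum := summable_zpow_seriesExponent hq0 hq
  refine (summable_mul_of_norm_le (summable_mul_of_norm_le (summable_mul_of_norm_le
    (summable_mul_of_norm_le hsum fun p ↦ hC p.1) fun p ↦ hC p.2.1) fun p ↦ hC p.2.2.1)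
    fun p ↦ hC p.2.2.2).congr fun p ↦ ?_
  simp only [Function.comp_apply, castQuadruple, seriesTerm, mul_assoc]

lemma tsum_seriesTerm_castQuadruple (q : ℂ) :
    ∑' p : ℕ × ℕ × ℕ × ℕ, seriesTerm q (castQuadruple p) = ∑' p, seriesTerm q p :=
  castQuadruple_injective.tsum_eq (support_seriesTerm_subset q)

/-- The change of variables `(m, l, s, i) ↦ (i, i + s, l + m, l)` that decouples the series. -/
def decouple : ℤ × ℤ × ℤ × ℤ ≃ ℤ × ℤ × ℤ × ℤ where
  toFun p := (p.2.2.2, p.2.2.2 + p.2.2.1, p.2.1 + p.1, p.2.1)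
  invFun p := (p.2.2.1 - p.2.2.2, p.2.2.2, p.2.1 - p.1, p.1)
  left_inv p := by simp
  right_inv p := by simp

lemma seriesExponent_decouple (m l s i : ℤ) :
    seriesExponent i (i + s) (l + m) l = (m ^ 2 + triangular m) + 2 * (l * (l + m) + 1 * l) +
      triangular (2 * s + (2 * l + m)) + 2 * (i * (i + s) + 0 * i) := by
  rw [seriesExponent]
  linarith [two_mul_triangular m, two_mul_triangular (2 * s + (2 * l + m))]

lemma seriesTerm_decouple (hq0 : q ≠ 0) (m l s i : ℤ) :
    seriesTerm q (decouple (m, l, s, i)) = q ^ (m ^ 2 + triangular m) *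
      (((q ^ 2) ^ (l * (l + m) + 1 * l) * (qPochInv (q ^ 2) l * qPochInv (q ^ 2) (l + m))) *
        (q ^ triangular (2 * s + (2 * l + m)) *
          ((q ^ 2) ^ (i * (i + s) + 0 * i) *
            (qPochInv (q ^ 2) i * qPochInv (q ^ 2) (i + s))))) := by
  have hsq (n : ℤ) : (q ^ 2) ^ n = q ^ (2 * n) := by rw [← zpow_natCast, ← zpow_mul, Nat.cast_two]
  simp only [seriesTerm, decouple, Equiv.coe_fn_mk, seriesExponent_decouple, hsq,
    zpow_add₀ hq0 _ (2 * _), zpow_add₀ hq0 _ (triangular (2 * _ + _))]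
  ring

lemma tsum_seriesTerm (hq0 : q ≠ 0) (hq : ‖q‖ < 1) :
    ∑' p, seriesTerm q p =
      ramanujanPsi q * ramanujanPsi (q ^ 3) / qPochInf (q ^ 2) (q ^ 2) ^ 2 := by
  have hsum := decouple.summable_iff.2 (summable_seriesTerm hq0 hq)
  rw [← decouple.tsum_eq]
  calc ∑' p, seriesTerm q (decouple p)
      = ∑' m, ∑' l, ∑' s, ∑' i, seriesTerm q (decouple (m, l, s, i)) := by
        refine hsum.tsum_prod.trans (tsum_congr fun m ↦ ?_)
        refine (hsum.prod_factor m).tsum_prod.trans (tsum_congr fun l ↦ ?_)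
        exact ((hsum.prod_factor m).prod_factor l).tsum_prod
    _ = ∑' m, q ^ (m ^ 2 + triangular m) * ∑' l,
          (q ^ 2) ^ (l * (l + m) + 1 * l) * (qPochInv (q ^ 2) l * qPochInv (q ^ 2) (l + m)) *
            ∑' s, q ^ triangular (2 * s + (2 * l + m)) * durfeeSum (q ^ 2) 0 s := by
        simp only [seriesTerm_decouple hq0, tsum_mul_left, durfeeSum]
    _ = (∑' m, q ^ (m ^ 2 + triangular m) * durfeeSum (q ^ 2) 1 m) *
          (ramanujanPsi q * (qPochInf (q ^ 2) (q ^ 2))⁻¹) := by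
        simp only [durfeeSum_zero (pow_ne_zero 2 hq0) (norm_pow_lt_one hq two_ne_zero),
          tsum_mul_right, tsum_zpow_triangular_two_mul_add]
        simp only [durfeeSum, mul_assoc, ← tsum_mul_right]
    _ = ramanujanPsi q * ramanujanPsi (q ^ 3) / qPochInf (q ^ 2) (q ^ 2) ^ 2 := by
        rw [tsum_zpow_mul_durfeeSum_one hq0 hq]
        ring

end QuadrupleSeries

theorem stmt_9 (q : ℂ) (h0 : 0 < ‖q‖) (h1 : ‖q‖ < 1) :
    (∑' p : ℕ × ℕ × ℕ × ℕ,
      (fun (i j k l : ℕ) =>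
        q ^ ((2*(i:ℤ)^2 + 2*(j:ℤ)^2 + 2*(k:ℤ)^2 + 2*(l:ℤ)^2 - 2*(i:ℤ)*(j:ℤ) - 2*(i:ℤ)*(k:ℤ) - 2*(i:ℤ)*(l:ℤ) + 2*(j:ℤ)*(k:ℤ) + 2*(j:ℤ)*(l:ℤ) - (i:ℤ) + (j:ℤ) + (k:ℤ) + 2*(l:ℤ)) : ℤ) /
          (qPoch (q ^ 2) (q ^ 2) i * qPoch (q ^ 2) (q ^ 2) j * qPoch (q ^ 2) (q ^ 2) k * qPoch (q ^ 2) (q ^ 2) l))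
        p.1 p.2.1 p.2.2.1 p.2.2.2)
    = (J q 6)^2 / (J q 1 * J q 3) := by
  have hq0 : q ≠ 0 := norm_pos_iff.1 h0
  have hne := qPochInf_ne_zero (norm_pow_lt_one h1 two_ne_zero) (norm_pow_lt_one h1 two_ne_zero)
  calc _ = ∑' p, seriesTerm q (castQuadruple p) := by
        refine tsum_congr fun p ↦ ?_
        simp only [seriesTerm, castQuadruple, seriesExponent, qPochInv_natCast, div_eq_mul_inv,
          mul_inv]
    _ = ramanujanPsi q * ramanujanPsi (q ^ 3) / qPochInf (q ^ 2) (q ^ 2) ^ 2 := by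
        rw [tsum_seriesTerm_castQuadruple, tsum_seriesTerm hq0 h1]
    _ = J q 6 ^ 2 / (J q 1 * J q 3) := by
        rw [ramanujanPsi_eq hq0 h1,
          ramanujanPsi_eq (pow_ne_zero 3 hq0) (norm_pow_lt_one h1 three_ne_zero), ← pow_mul, J, J,
          J, pow_one]
        field_simp
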